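/- arXiv:1110.0091 — 2 statements merged into one kernel-verified Lean document; each statement's English description precedes it below -/
import Mathlib

section
/- Let φ : S² → S² be a homeomorphism with φⁿ = id, and let λ ≠ 1 be an n-th root of unity. Then for every continuous function f : S² → ℂ there exists x ∈ S² with ∑_{i=0}^{n-1} λⁱ f(φⁱ(x)) = 0. -/
/-!
Put `F x = ∑ i < n, λ ^ i * f (φ^[i] x)`. Since `λ ^ n = 1` and `φ^[n] = id`, `F = λ * (F ∘ φ)`.
If `F` had no zero, it would have a continuous logarithm `G` on the sphere, and `G - G ∘ φ` would be
a constant `d` with `exp d = λ`, by connectedness. Summing along a periodic orbit, a positive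
multiple of `d` is `0`, so `d = 0` and `λ = 1`.

Logarithms exist on the sphere because they exist on the complements of two antipodal points, which
stereographic projection identifies with vector spaces, and two logarithms differ by a constant on
the connected overlap.
-/

open Set Function Metric

section ContinuousLog

variable {X Y : Type*} [TopologicalSpace X] [TopologicalSpace Y] {s t : Set X}

/-- Every complex function that is continuous and nowhere zero on `s` has a continuous logarithm
on `s`. This consequence of simple connectedness is all the argument needs of the sphere, and it is
easier to glue along an open cover. As usual for `ContinuousOn`, functions are total and their
values outside `s` are irrelevant. -/
def HasContinuousLogOn (s : Set X) : Prop :=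
  ∀ F : X → ℂ, ContinuousOn F s → (∀ x ∈ s, F x ≠ 0) →
    ∃ G : X → ℂ, ContinuousOn G s ∧ EqOn (Complex.exp ∘ G) F s

theorem hasContinuousLogOn_univ [SimplyConnectedSpace X] [LocallyPathConnectedSpace X] :
    HasContinuousLogOn (univ : Set X) := fun _ hF hF₀ =>
  Complex.exists_continuousOn_eqOn_exp_comp
    (Homeomorph.Set.univ X).toHomotopyEquiv.simplyConnectedSpace isOpen_univ hF
    (by simpa using hF₀)

theorem HasContinuousLogOn.source_of_target (e : OpenPartialHomeomorph X Y)
    (h : HasContinuousLogOn e.target) : HasContinuousLogOn e.source := by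
  intro F hF hF₀
  obtain ⟨G, hG, hGF⟩ := h (F ∘ e.symm) (hF.comp e.continuousOn_symm e.mapsTo_symm)
    fun y hy => hF₀ _ (e.map_target hy)
  refine ⟨G ∘ e, hG.comp e.continuousOn e.mapsTo, fun x hx => ?_⟩
  simpa only [comp_apply, e.left_inv hx] using hGF (e.map_source hx)

theorem eq_of_exp_eq_const_of_isPreconnected (hs : IsPreconnected s) {g : X → ℂ}
    (hg : ContinuousOn g s) {c : ℂ} (hc : ∀ x ∈ s, Complex.exp (g x) = c) {x y : X} (hx : x ∈ s)
    (hy : y ∈ s) : g x = g y :=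
  Complex.isCoveringMap_exp.constOn_of_comp hs hg
    (fun a ha b hb => Subtype.ext ((hc a ha).trans (hc b hb).symm)) hx hy

theorem exists_eq_add_const_of_exp_eq (hs : IsPreconnected s) {P Q : X → ℂ}
    (hP : ContinuousOn P s) (hQ : ContinuousOn Q s)
    (hPQ : ∀ x ∈ s, Complex.exp (P x) = Complex.exp (Q x)) :
    ∃ c, Complex.exp c = 1 ∧ ∀ x ∈ s, P x = Q x + c := by
  rcases s.eq_empty_or_nonempty with rfl | ⟨a, ha⟩
  · exact ⟨0, Complex.exp_zero, by simp⟩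
  have hexp : ∀ x ∈ s, Complex.exp (P x - Q x) = 1 := fun x hx => by
    rw [Complex.exp_sub, hPQ x hx, div_self (Complex.exp_ne_zero _)]
  refine ⟨P a - Q a, hexp a ha, fun x hx => ?_⟩
  exact sub_eq_iff_eq_add'.1 (eq_of_exp_eq_const_of_isPreconnected hs (hP.sub hQ) hexp hx ha)

theorem HasContinuousLogOn.union (hs : HasContinuousLogOn s) (ht : HasContinuousLogOn t)
    (hso : IsOpen s) (hto : IsOpen t) (hst : IsPreconnected (s ∩ t)) :
    HasContinuousLogOn (s ∪ t) := by
  classical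
  intro F hF hF₀
  obtain ⟨P, hP, hPF⟩ := hs F (hF.mono subset_union_left) fun x hx => hF₀ x (.inl hx)
  obtain ⟨Q, hQ, hQF⟩ := ht F (hF.mono subset_union_right) fun x hx => hF₀ x (.inr hx)
  obtain ⟨c, hc, hPQ⟩ := exists_eq_add_const_of_exp_eq hst (hP.mono inter_subset_left)
    (hQ.mono inter_subset_right) fun x hx => (hPF hx.1).trans (hQF hx.2).symm
  let G : X → ℂ := s.piecewise P fun x => Q x + c
  have hGs : EqOn G P s := piecewise_eqOn _ _ _
  have hGt : EqOn G (fun x => Q x + c) t := fun x hx => by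
    by_cases hxs : x ∈ s
    · rw [hGs hxs, hPQ x ⟨hxs, hx⟩]
    · exact piecewise_eq_of_notMem _ _ _ hxs
  refine ⟨G, (hP.congr hGs).union_of_isOpen ((hQ.add continuousOn_const).congr hGt) hso hto, ?_⟩
  rintro x (hx | hx)
  · simpa only [comp_apply, hGs hx] using hPF hx
  · simpa only [comp_apply, hGt hx, Complex.exp_add, hc, mul_one] using hQF hx

end ContinuousLog

section Sphere

variable {E : Type*} [NormedAddCommGroup E] [InnerProductSpace ℝ E]

theorem hasContinuousLogOn_compl_singleton_sphere (v : sphere (0 : E) 1) :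
    HasContinuousLogOn ({v}ᶜ : Set (sphere (0 : E) 1)) := by
  have hv : ‖(v : E)‖ = 1 := norm_eq_of_mem_sphere v
  simpa only [stereographic_source] using
    HasContinuousLogOn.source_of_target (stereographic hv) hasContinuousLogOn_univ

theorem one_lt_rank_orthogonal_span_singleton (hE : 2 < Module.rank ℝ E) (v : E) :
    1 < Module.rank ℝ (ℝ ∙ v)ᗮ := by
  have hspan : Module.rank ℝ (ℝ ∙ v) ≤ 1 := by simpa using rank_span_le (R := ℝ) {v}
  have hrank : Module.rank ℝ (ℝ ∙ v)ᗮ + Module.rank ℝ (ℝ ∙ v) = Module.rank ℝ E := by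
    rw [← (Submodule.quotientEquivOfIsCompl _ _ (ℝ ∙ v).isCompl_orthogonal).rank_eq,
      Submodule.rank_quotient_add_rank]
  contrapose! hE
  calc Module.rank ℝ E = Module.rank ℝ (ℝ ∙ v)ᗮ + Module.rank ℝ (ℝ ∙ v) := hrank.symm
    _ ≤ 1 + 1 := add_le_add hE hspan
    _ = 2 := one_add_one_eq_two

theorem stereographic_symm_image_compl_zero (v : sphere (0 : E) 1) :
    (stereographic (norm_eq_of_mem_sphere v)).symm '' {0}ᶜ = {v}ᶜ ∩ {-v}ᶜ := by
  have hzero : (stereographic (norm_eq_of_mem_sphere v)).symm 0 = -v := by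
    rw [← stereographic_apply_neg v]
    exact (stereographic _).left_inv (ne_neg_of_mem_unit_sphere ℝ v).symm
  rw [image_compl_eq_range_sdiff_image
    (isOpenEmbedding_stereographic_symm (norm_eq_of_mem_sphere v)).injective,
    range_stereographic_symm _ v.2, image_singleton, hzero, sdiff_eq]

theorem isPreconnected_compl_antipodal_pair (hE : 2 < Module.rank ℝ E) (v : sphere (0 : E) 1) :
    IsPreconnected ({v}ᶜ ∩ {-v}ᶜ : Set (sphere (0 : E) 1)) := by
  have hv : ‖(v : E)‖ = 1 := norm_eq_of_mem_sphere v
  rw [← stereographic_symm_image_compl_zero]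
  exact (isConnected_compl_singleton_of_one_lt_rank
    (one_lt_rank_orthogonal_span_singleton hE v) 0).isPreconnected.image _
    (isOpenEmbedding_stereographic_symm hv).continuous.continuousOn

theorem hasContinuousLogOn_univ_sphere (hE : 2 < Module.rank ℝ E) :
    HasContinuousLogOn (univ : Set (sphere (0 : E) 1)) := by
  have hE' : 1 < Module.rank ℝ E := Cardinal.one_lt_two.trans hE
  obtain ⟨v, hv⟩ := (isConnected_sphere hE' (0 : E) zero_le_one).nonempty
  lift v to sphere (0 : E) 1 using hv
  have hcover : ({v}ᶜ ∪ {-v}ᶜ : Set (sphere (0 : E) 1)) = univ := by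
    have hne : v ∉ ({-v} : Set (sphere (0 : E) 1)) := ne_neg_of_mem_unit_sphere ℝ v
    rw [← compl_inter, singleton_inter_eq_empty.2 hne, compl_empty]
  rw [← hcover]
  exact (hasContinuousLogOn_compl_singleton_sphere v).union
    (hasContinuousLogOn_compl_singleton_sphere (-v)) isOpen_compl_singleton isOpen_compl_singleton
    (isPreconnected_compl_antipodal_pair hE v)

end Sphere

section Dynamics

theorem sum_pow_mul_iterate_eq_mul {α R : Type*} [Ring R] {φ : α → α} {f : α → R} {c : R} {n : ℕ}
    (hc : c ^ n = 1) {x : α} (hf : f (φ^[n] x) = f x) :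
    ∑ i ∈ Finset.range n, c ^ i * f (φ^[i] x) =
      c * ∑ i ∈ Finset.range n, c ^ i * f (φ^[i] (φ x)) := by
  have hshift : c * ∑ i ∈ Finset.range n, c ^ i * f (φ^[i] (φ x)) =
      ∑ i ∈ Finset.range n, c ^ (i + 1) * f (φ^[i + 1] x) := by
    simp only [Finset.mul_sum, pow_succ', mul_assoc, iterate_succ_apply]
  have hlast : c ^ n * f (φ^[n] x) = c ^ 0 * f (φ^[0] x) := by
    rw [hc, hf, pow_zero, iterate_zero_apply]
  rw [hshift, ← add_left_inj (c ^ n * f (φ^[n] x)), ← Finset.sum_range_succ, Finset.sum_range_succ',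
    hlast]

theorem eq_zero_of_sub_comp_eq_const {α M : Type*} [AddCommGroup M] [IsAddTorsionFree M]
    {φ : α → α} {G : α → M} {d : M} (hd : ∀ x, G x - G (φ x) = d) {x₀ : α}
    (hx₀ : x₀ ∈ periodicPts φ) : d = 0 := by
  obtain ⟨m, hm, hperiod⟩ := hx₀
  have hsum : m • d = 0 := calc
    m • d = ∑ i ∈ Finset.range m, (G (φ^[i] x₀) - G (φ^[i + 1] x₀)) := by
      simp only [iterate_succ_apply', hd, Finset.sum_const, Finset.card_range]
    _ = G x₀ - G (φ^[m] x₀) := Finset.sum_range_sub' (fun i => G (φ^[i] x₀)) m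
    _ = 0 := by rw [hperiod.eq, sub_self]
  exact (smul_eq_zero_iff_right hm.ne').1 hsum

variable {X : Type*} [TopologicalSpace X] [PreconnectedSpace X] {φ : X → X} {x₀ : X} {c : ℂ}

theorem eq_one_of_eq_mul_comp (hX : HasContinuousLogOn (univ : Set X)) (hφ : Continuous φ)
    (hx₀ : x₀ ∈ periodicPts φ) {F : X → ℂ} (hF : Continuous F) (hF₀ : ∀ x, F x ≠ 0)
    (hFφ : ∀ x, F x = c * F (φ x)) : c = 1 := by
  obtain ⟨G, hG, hGF⟩ := hX F hF.continuousOn fun x _ => hF₀ x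
  rw [continuousOn_univ] at hG
  have hexp : ∀ x, Complex.exp (G x - G (φ x)) = c := fun x => by
    have hexpG : ∀ y, Complex.exp (G y) = F y := fun y => hGF (mem_univ y)
    rw [Complex.exp_sub, hexpG, hexpG, hFφ x, mul_div_cancel_right₀ _ (hF₀ (φ x))]
  have hconst : ∀ x, G x - G (φ x) = G x₀ - G (φ x₀) := fun x =>
    eq_of_exp_eq_const_of_isPreconnected isPreconnected_univ (hG.sub (hG.comp hφ)).continuousOn
      (fun y _ => hexp y) (mem_univ x) (mem_univ x₀)
  rw [← hexp x₀, eq_zero_of_sub_comp_eq_const hconst hx₀, Complex.exp_zero]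

theorem stmt_2_general (hX : HasContinuousLogOn (univ : Set X)) (hφ : Continuous φ)
    (hx₀ : x₀ ∈ periodicPts φ) {n : ℕ} (hc : c ^ n = 1) (hc₁ : c ≠ 1) {f : X → ℂ}
    (hf : Continuous f) (hfφ : ∀ x, f (φ^[n] x) = f x) :
    ∃ x, ∑ i ∈ Finset.range n, c ^ i * f (φ^[i] x) = 0 := by
  by_contra! hF₀
  have hF : Continuous fun x => ∑ i ∈ Finset.range n, c ^ i * f (φ^[i] x) :=
    continuous_finsetSum _ fun i _ => continuous_const.mul (hf.comp (hφ.iterate i))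
  exact hc₁ (eq_one_of_eq_mul_comp hX hφ hx₀ hF hF₀ fun x => sum_pow_mul_iterate_eq_mul hc (hfφ x))

end Dynamics

theorem stmt_2 (n : ℕ) (hn : 0 < n)
    (φ : Metric.sphere (0 : EuclideanSpace ℝ (Fin 3)) 1 ≃ₜ
         Metric.sphere (0 : EuclideanSpace ℝ (Fin 3)) 1)
    (hφ : ∀ x, (⇑φ)^[n] x = x)
    (lam : ℂ) (hlam : lam ^ n = 1) (hlam1 : lam ≠ 1)
    (f : C(Metric.sphere (0 : EuclideanSpace ℝ (Fin 3)) 1, ℂ)) :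
    ∃ x : Metric.sphere (0 : EuclideanSpace ℝ (Fin 3)) 1,
      ∑ i ∈ Finset.range n, lam ^ i * f ((⇑φ)^[i] x) = 0 := by
  have hrank : 2 < Module.rank ℝ (EuclideanSpace ℝ (Fin 3)) := by
    rw [← Module.finrank_eq_rank, finrank_euclideanSpace_fin]
    norm_num
  have : ConnectedSpace (sphere (0 : EuclideanSpace ℝ (Fin 3)) 1) :=
    isConnected_iff_connectedSpace.1
      (isConnected_sphere (Cardinal.one_lt_two.trans hrank) 0 zero_le_one)
  obtain ⟨x₀⟩ : Nonempty (sphere (0 : EuclideanSpace ℝ (Fin 3)) 1) := inferInstance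
  exact stmt_2_general (hasContinuousLogOn_univ_sphere hrank) φ.continuous
    (mk_mem_periodicPts hn (hφ x₀)) hlam hlam1 f.continuous fun x => congrArg f (hφ x)
end

section
/- Let A be a unital complex Banach algebra without nontrivial idempotents (no a with a² = a, a ≠ 0, a ≠ 1). Then the spectrum of every element of A is connected. -/
/-!
If the spectrum of `a` splits into two nonempty disjoint closed parts, a cutoff `φ` equal to `1`
near one part and to `0` near the other yields the idempotent `φ(a)`, whose spectrum contains both
`0` and `1`. Here `φ(a) = -(1/π) ∫ ∂φ/∂z̄ · (z - a)⁻¹` is a planar integral, so that no contour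
separating the two parts is needed. Writing `C` for convolution with the fundamental solution
`1 / (π z)` of `∂/∂z̄`, the resolvent identity gives
`(z - a) C(∂φ/∂z̄ · (· - a)⁻¹)(z) = φ(z) - φ(a)`. This puts `φ(z)` in the spectrum of `φ(a)` when
`z` is in that of `a`, and combined with the antisymmetry of `C` and the Leibniz rule it makes
`φ ↦ φ(a)` multiplicative.
-/

open Complex Filter Function MeasureTheory Set Topology
open ContinuousLinearMap (lsmul)
open scoped Convolution Real

section WirtingerDerivative

variable {E : Type*} [NormedAddCommGroup E] [NormedSpace ℂ E]

/-- The Wirtinger derivative `∂f/∂z̄ = (∂f/∂x + i ∂f/∂y) / 2`, which detects where a real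
differentiable function of a complex variable fails to be holomorphic. -/
noncomputable def dbar (f : ℂ → E) (z : ℂ) : E :=
  (2⁻¹ : ℂ) • (fderiv ℝ f z 1 + I • fderiv ℝ f z I)

theorem dbar_eq_of_eventuallyEq {f g : ℂ → E} {z : ℂ} (h : f =ᶠ[𝓝 z] g) :
    dbar f z = dbar g z := by
  simp only [dbar, h.fderiv_eq]

theorem dbar_const (c : E) : dbar (fun _ : ℂ ↦ c) = 0 := by
  ext z
  simp [dbar]

theorem dbar_eq_zero_of_differentiableAt {f : ℂ → E} {z : ℂ} (hf : DifferentiableAt ℂ f z) :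
    dbar f z = 0 := by
  have cauchyRiemann := (differentiableAt_complex_iff_differentiableAt_real.1 hf).2
  rw [dbar, cauchyRiemann, smul_smul, I_mul_I, neg_one_smul, add_neg_cancel, smul_zero]

theorem dbar_smul {φ : ℂ → ℂ} {g : ℂ → E} {z : ℂ} (hφ : DifferentiableAt ℝ φ z)
    (hg : DifferentiableAt ℝ g z) :
    dbar (fun w ↦ φ w • g w) z = dbar φ z • g z + φ z • dbar g z := by
  simp only [dbar, fderiv_fun_smul hφ hg, add_apply,
    smul_apply, ContinuousLinearMap.smulRight_apply, smul_eq_mul]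
  module

theorem dbar_mul {φ ψ : ℂ → ℂ} {z : ℂ} (hφ : DifferentiableAt ℝ φ z)
    (hψ : DifferentiableAt ℝ ψ z) : dbar (φ * ψ) z = dbar φ z * ψ z + φ z * dbar ψ z :=
  dbar_smul hφ hψ

theorem dbar_sub {f g : ℂ → E} {z : ℂ} (hf : DifferentiableAt ℝ f z)
    (hg : DifferentiableAt ℝ g z) :
    dbar (f - g) z = dbar f z - dbar g z := by
  simp only [dbar, fderiv_sub hf hg, sub_apply]
  module

theorem dbar_comp_add_right (f : ℂ → E) (a z : ℂ) :
    dbar (fun w ↦ f (w + a)) z = dbar f (z + a) := by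
  simp only [dbar, fderiv_comp_add_right]

theorem continuous_dbar {f : ℂ → E} (hf : ContDiff ℝ 1 f) : Continuous (dbar f) := by
  have := hf.continuous_fderiv one_ne_zero
  unfold dbar
  fun_prop

theorem tsupport_dbar_subset (f : ℂ → E) : tsupport (dbar f) ⊆ tsupport f := by
  refine closure_minimal (fun z hz ↦ ?_) (isClosed_tsupport f)
  contrapose! hz
  simp [dbar, fderiv_of_notMem_tsupport ℝ hz]

theorem hasCompactSupport_dbar {f : ℂ → E} (hf : HasCompactSupport f) :
    HasCompactSupport (dbar f) :=
  hf.of_isClosed_subset (isClosed_tsupport _) (tsupport_dbar_subset f)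

theorem notMem_tsupport_dbar_of_eventuallyEq_const {f : ℂ → E} {z : ℂ} {c : E}
    (h : f =ᶠ[𝓝 z] fun _ ↦ c) : z ∉ tsupport (dbar f) := by
  rw [notMem_tsupport_iff_eventuallyEq]
  filter_upwards [h.eventuallyEq_nhds] with w hw
  rw [dbar_eq_of_eventuallyEq hw, dbar_const]

theorem integral_dbar_eq_zero {f : ℂ → E} (hf : ContDiff ℝ 1 f) (hc : HasCompactSupport f) :
    ∫ z, dbar f z = 0 := by
  have := hf.continuous_fderiv one_ne_zero
  have hint (v : ℂ) : Integrable (fun z ↦ fderiv ℝ f z v) :=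
    Continuous.integrable_of_hasCompactSupport (by fun_prop) (hc.fderiv_apply ℝ v)
  have hzero (v : ℂ) : ∫ z, fderiv ℝ f z v = 0 := by
    simpa using integral_smul_fderiv_eq_neg_fderiv_smul_of_integrable (μ := volume)
      (f := fun _ : ℂ ↦ (1 : ℂ)) (g := f) (v := v) (by simp) (by simpa using hint v)
      (by simpa using hf.continuous.integrable_of_hasCompactSupport hc)
      (fun _ _ ↦ differentiableAt_const _) (fun _ _ ↦ hf.differentiable one_ne_zero _)
  have hintI : Integrable (fun z ↦ I • fderiv ℝ f z I) := (hint I).smul I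
  simp only [dbar, integral_smul, integral_add (hint 1) hintI, hzero, smul_zero, add_zero]

theorem integral_dbar_smul_eq_zero [CompleteSpace E] {φ : ℂ → ℂ} {g : ℂ → E} {U : Set ℂ}
    (hφ : ContDiff ℝ 1 φ) (hc : HasCompactSupport φ) (hU : IsOpen U) (hφU : tsupport φ ⊆ U)
    (hg : DifferentiableOn ℂ g U) : ∫ z, dbar φ z • g z = 0 := by
  have hg_contDiffAt {z : ℂ} (hz : z ∈ tsupport φ) : ContDiffAt ℝ 1 g z :=
    (((hg.analyticOnNhd hU) z (hφU hz)).contDiffAt (n := 1)).restrict_scalars ℝ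
  have hφg : ContDiff ℝ 1 (fun z ↦ φ z • g z) := contDiff_iff_contDiffAt.2 fun z ↦ by
    by_cases hz : z ∈ tsupport φ
    · exact hφ.contDiffAt.smul (hg_contDiffAt hz)
    · refine (contDiffAt_const (c := (0 : E))).congr_of_eventuallyEq ?_
      filter_upwards [notMem_tsupport_iff_eventuallyEq.1 hz] with w hw
      simp [hw]
  have hdbar (z : ℂ) : dbar (fun w ↦ φ w • g w) z = dbar φ z • g z := by
    by_cases hz : z ∈ tsupport φ
    · rw [dbar_smul (hφ.differentiable one_ne_zero z)
        ((hg_contDiffAt hz).differentiableAt one_ne_zero),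
        dbar_eq_zero_of_differentiableAt (hg.differentiableAt (hU.mem_nhds (hφU hz))),
        smul_zero, add_zero]
    · rw [image_eq_zero_of_notMem_tsupport fun h ↦ hz (tsupport_dbar_subset φ h), zero_smul,
        image_eq_zero_of_notMem_tsupport fun h ↦ hz (tsupport_smul_subset_left φ g
          (tsupport_dbar_subset _ h))]
  simpa only [hdbar] using integral_dbar_eq_zero hφg hc.smul_right

end WirtingerDerivative

section CauchyPompeiu

variable {E : Type*} [NormedAddCommGroup E]

theorem integrableOn_polarCoord_target {h : ℝ × ℝ → E} (hh : Continuous h) {R : ℝ}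
    (hR : ∀ r θ : ℝ, R < r → h (r, θ) = 0) :
    IntegrableOn h (Ioi (0 : ℝ) ×ˢ Ioo (-π) π) := by
  have hcompact : IntegrableOn h (Icc 0 R ×ˢ Icc (-π) π) :=
    hh.continuousOn.integrableOn_compact (isCompact_Icc.prod isCompact_Icc)
  refine hcompact.of_forall_sdiff_eq_zero (by measurability) fun p hp ↦ hR p.1 p.2 ?_
  obtain ⟨⟨hr_pos : 0 < p.1, hθ⟩, hp_notMem⟩ := hp
  by_contra! hr_le
  exact hp_notMem ⟨⟨hr_pos.le, hr_le⟩, Ioo_subset_Icc_self hθ⟩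

variable [NormedSpace ℂ E]

theorem integral_comp_circleMap_eq_integral (f : ℂ → E) :
    ∫ p in Ioi (0 : ℝ) ×ˢ Ioo (-π) π, p.1 • f (circleMap 0 p.1 p.2) = ∫ z, f z := by
  rw [← Complex.integral_comp_polarCoord_symm, polarCoord_target]
  simp only [circleMap_zero, exp_mul_I, Complex.polarCoord_symm_apply, ofReal_cos, ofReal_sin]

theorem map_add_I_smul_map_I_mul (L : ℂ →L[ℝ] E) (v : ℂ) :
    L v + I • L (I * v) = starRingEnd ℂ v • (L 1 + I • L I) := by
  have map_re_im (w : ℂ) : L w = (w.re : ℂ) • L 1 + (w.im : ℂ) • L I := by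
    conv_lhs => rw [show w = w.re • 1 + w.im • I by simp [re_add_im]]
    rw [map_add, map_smul, map_smul, coe_smul, coe_smul]
  have hconj : starRingEnd ℂ v = v.re - v.im * I := by apply Complex.ext <;> simp
  rw [map_re_im v, map_re_im (I * v), I_mul_re, I_mul_im, hconj, ofReal_neg]
  linear_combination (norm := module) (v.im : ℂ) • I_mul_I • L I

theorem smul_inv_circleMap_smul_dbar (f : ℂ → E) {r : ℝ} (hr : r ≠ 0) (θ : ℝ) :
    r • (circleMap 0 r θ)⁻¹ • dbar f (circleMap 0 r θ) =
      (2⁻¹ : ℂ) • (fderiv ℝ f (circleMap 0 r θ) (circleMap 0 1 θ) +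
        I • fderiv ℝ f (circleMap 0 r θ) (I * circleMap 0 1 θ)) := by
  have hconj : (r : ℂ) * (circleMap 0 r θ)⁻¹ = starRingEnd ℂ (circleMap 0 1 θ) := by
    rw [circleMap_zero, circleMap_zero, mul_inv, mul_inv_cancel_left₀ (ofReal_ne_zero.2 hr)]
    simp [← exp_conj, ← exp_neg]
  rw [map_add_I_smul_map_I_mul, ← hconj, dbar, ← coe_smul]
  module

theorem integrableOn_fderiv_circleMap {f : ℂ → E} (hf : ContDiff ℝ 1 f)
    (hc : HasCompactSupport f) {v : ℝ → ℂ} (hv : Continuous v) :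
    IntegrableOn (fun p : ℝ × ℝ ↦ fderiv ℝ f (circleMap 0 p.1 p.2) (v p.2))
      (Ioi (0 : ℝ) ×ˢ Ioo (-π) π) := by
  have := hf.continuous_fderiv one_ne_zero
  obtain ⟨R, hR⟩ := (hc.fderiv ℝ).isCompact.isBounded.exists_norm_le
  refine integrableOn_polarCoord_target (by simp only [circleMap]; fun_prop)
    (R := R) fun r θ hr ↦ ?_
  have : circleMap 0 r θ ∉ tsupport (fderiv ℝ f) := fun h ↦
    hr.not_ge ((le_abs_self r).trans (by simpa using hR _ h))
  simp [image_eq_zero_of_notMem_tsupport this]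

variable [CompleteSpace E]

theorem integral_fderiv_circleMap_radial {f : ℂ → E} (hf : ContDiff ℝ 1 f)
    (hc : HasCompactSupport f) (θ : ℝ) :
    ∫ r in Ioi (0 : ℝ), fderiv ℝ f (circleMap 0 r θ) (circleMap 0 1 θ) = -f 0 := by
  have hray : ContDiff ℝ 1 (fun r : ℝ ↦ circleMap 0 r θ) := by
    simp only [circleMap_zero]
    exact ofRealCLM.contDiff.mul contDiff_const
  have hderiv (r : ℝ) : HasDerivAt (fun r : ℝ ↦ f (circleMap 0 r θ))
      (fderiv ℝ f (circleMap 0 r θ) (circleMap 0 1 θ)) r := by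
    refine (hf.differentiable one_ne_zero _).hasFDerivAt.comp_hasDerivAt r ?_
    simpa [circleMap] using (hasDerivAt_id r).ofReal_comp.mul_const (exp (θ * I))
  have hsupp : HasCompactSupport (fun r : ℝ ↦ f (circleMap 0 r θ)) := by
    obtain ⟨R, hR⟩ := hc.isCompact.isBounded.exists_norm_le
    refine HasCompactSupport.intro (isCompact_Icc (a := -R) (b := R)) fun r hr ↦ ?_
    refine image_eq_zero_of_notMem_tsupport fun hmem ↦ hr (abs_le.1 ?_)
    simpa using hR _ hmem
  simpa [comp_def, (hderiv _).deriv] using hsupp.integral_Ioi_deriv_eq (hf.comp hray) 0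

theorem integral_fderiv_circleMap_angular {f : ℂ → E} (hf : ContDiff ℝ 1 f) {r : ℝ}
    (hr : r ≠ 0) :
    ∫ θ in Ioo (-π) π, fderiv ℝ f (circleMap 0 r θ) (I * circleMap 0 1 θ) = 0 := by
  have := hf.continuous_fderiv one_ne_zero
  have hderiv (θ : ℝ) : HasDerivAt (fun θ : ℝ ↦ r⁻¹ • f (circleMap 0 r θ))
      (fderiv ℝ f (circleMap 0 r θ) (I * circleMap 0 1 θ)) θ := by
    have hvelocity : circleMap 0 r θ * I = r • (I * circleMap 0 1 θ) := by
      simp only [circleMap_zero, real_smul]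
      push_cast
      ring
    have := ((hf.differentiable one_ne_zero (circleMap 0 r θ)).hasFDerivAt.comp_hasDerivAt θ
      (hasDerivAt_circleMap 0 r θ)).const_smul r⁻¹
    rwa [hvelocity, map_smul, inv_smul_smul₀ hr] at this
  have hperiodic : circleMap 0 r π = circleMap 0 r (-π) := by
    rw [← periodic_circleMap 0 r (-π)]
    ring_nf
  rw [← integral_Ioc_eq_integral_Ioo, ← intervalIntegral.integral_of_le (by linarith [Real.pi_pos]),
    intervalIntegral.integral_eq_sub_of_hasDerivAt (fun θ _ ↦ hderiv θ)
      (Continuous.intervalIntegrable (by fun_prop) _ _), hperiodic, sub_self]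

theorem integral_inv_smul_dbar {f : ℂ → E} (hf : ContDiff ℝ 1 f) (hc : HasCompactSupport f) :
    ∫ z, z⁻¹ • dbar f z = -(π : ℂ) • f 0 := by
  -- In polar coordinates `∂/∂z̄ = (e^{iθ} / 2) (∂/∂r + (i / r) ∂/∂θ)`.
  have hradial := integrableOn_fderiv_circleMap hf hc (continuous_circleMap 0 1)
  have hangular := integrableOn_fderiv_circleMap hf hc
    (v := fun θ ↦ I * circleMap 0 1 θ) (continuous_const.mul (continuous_circleMap 0 1))
  have integral_radial : ∫ p in Ioi (0 : ℝ) ×ˢ Ioo (-π) π,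
      fderiv ℝ f (circleMap 0 p.1 p.2) (circleMap 0 1 p.2) = (2 * π : ℂ) • -f 0 := by
    rw [Measure.volume_eq_prod, ← setIntegral_prod_swap]
    refine (setIntegral_prod _ hradial.swap).trans <|
      (setIntegral_congr_fun measurableSet_Ioo fun θ _ ↦
        integral_fderiv_circleMap_radial hf hc θ).trans ?_
    rw [setIntegral_const, Real.volume_real_Ioo_of_le (neg_le_self Real.pi_pos.le), ← coe_smul]
    push_cast
    ring_nf
  have integral_angular : ∫ p in Ioi (0 : ℝ) ×ˢ Ioo (-π) π,
      fderiv ℝ f (circleMap 0 p.1 p.2) (I * circleMap 0 1 p.2) = 0 := by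
    rw [Measure.volume_eq_prod, setIntegral_prod _ hangular]
    exact setIntegral_eq_zero_of_forall_eq_zero fun r hr ↦
      integral_fderiv_circleMap_angular hf (ne_of_gt hr)
  rw [← integral_comp_circleMap_eq_integral,
    setIntegral_congr_fun (measurableSet_Ioi.prod measurableSet_Ioo)
      fun p hp ↦ smul_inv_circleMap_smul_dbar f (ne_of_gt hp.1) p.2,
    integral_smul, integral_add hradial (hangular.fun_smul I), integral_smul,
    integral_radial, integral_angular]
  module

end CauchyPompeiu

section CauchyTransform

variable {E : Type*} [NormedAddCommGroup E] [NormedSpace ℂ E]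

/-- The Cauchy transform of `g`, its convolution with the fundamental solution `1 / (π z)` of
`∂/∂z̄`; it inverts `dbar` on compactly supported functions. -/
noncomputable def cauchyTransform (g : ℂ → E) (z : ℂ) : E :=
  (π : ℂ)⁻¹ • ∫ w, (z - w)⁻¹ • g w

theorem locallyIntegrable_complex_inv : LocallyIntegrable (fun z : ℂ ↦ z⁻¹) := by
  refine locallyIntegrable_of_norm_le_rpow (C := 1) (α := 1) ?_ ?_ (.of_forall fun z ↦ ?_)
    measurable_inv.aestronglyMeasurable
  · simp [finrank_real_complex]
  · simp [finrank_real_complex]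
  · simp [Real.rpow_neg_one]

theorem integrable_inv_sub_smul {g : ℂ → E} (hg : Continuous g) (hc : HasCompactSupport g)
    (z : ℂ) : Integrable (fun w ↦ (z - w)⁻¹ • g w) :=
  (hc.convolutionExists_right (lsmul ℂ ℂ) locallyIntegrable_complex_inv hg z).integrable_swap

theorem continuous_cauchyTransform {g : ℂ → E} (hg : Continuous g) (hc : HasCompactSupport g) :
    Continuous (cauchyTransform g) := by
  have hconv := hc.continuous_convolution_right (lsmul ℂ ℂ) locallyIntegrable_complex_inv hg
  exact (hconv.congr fun _ ↦ convolution_lsmul_swap).const_smul (π : ℂ)⁻¹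

theorem cauchyTransform_dbar [CompleteSpace E] {f : ℂ → E} (hf : ContDiff ℝ 1 f)
    (hc : HasCompactSupport f) : cauchyTransform (dbar f) = f := by
  ext z
  have pompeiu : ∫ w, w⁻¹ • dbar f (w + z) = -(π : ℂ) • f z := by
    simpa only [dbar_comp_add_right, zero_add] using integral_inv_smul_dbar
      (f := fun w ↦ f (w + z)) (hf.comp (contDiff_id.add contDiff_const))
      (hc.comp_homeomorph (Homeomorph.addRight z))
  have hπ : (π : ℂ) ≠ 0 := ofReal_ne_zero.2 Real.pi_ne_zero
  have translate : ∫ w, (z - w)⁻¹ • dbar f w = -∫ w, w⁻¹ • dbar f (w + z) := by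
    rw [← integral_add_right_eq_self _ z, ← integral_neg]
    simp only [sub_add_cancel_right, inv_neg, neg_smul]
  rw [cauchyTransform, translate, pompeiu, neg_smul, neg_neg, inv_smul_smul₀ hπ]

theorem integrable_prod_smul_inv_sub_smul {f : ℂ → ℂ} {g : ℂ → E} (hf : Continuous f)
    (hfc : HasCompactSupport f) (hg : Continuous g) (hgc : HasCompactSupport g) :
    Integrable (fun p : ℂ × ℂ ↦ f p.1 • (p.1 - p.2)⁻¹ • g p.2) (volume.prod volume) := by
  have hmeas : AEStronglyMeasurable (fun p : ℂ × ℂ ↦ f p.1 • (p.1 - p.2)⁻¹ • g p.2)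
      (volume.prod volume) :=
    (hf.comp continuous_fst).aestronglyMeasurable.smul
      ((measurable_fst.sub measurable_snd).inv.aestronglyMeasurable.smul
        (hg.comp continuous_snd).aestronglyMeasurable)
  refine (integrable_prod_iff hmeas).2
    ⟨.of_forall fun w ↦ (integrable_inv_sub_smul hg hgc w).smul (f w), ?_⟩
  have hnorm_conv : Continuous fun w ↦ ∫ u, ‖(w - u)⁻¹‖ • ‖g u‖ := by
    have hlocal : LocallyIntegrable fun z : ℂ ↦ ‖z⁻¹‖ :=
      fun z ↦ (locallyIntegrable_complex_inv z).norm
    exact (hgc.norm.continuous_convolution_right (lsmul ℝ ℝ) hlocal hg.norm).congr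
      fun _ ↦ convolution_lsmul_swap
  have hcont : Continuous fun w ↦ ‖f w‖ * ∫ u, ‖(w - u)⁻¹‖ • ‖g u‖ := hf.norm.mul hnorm_conv
  simpa only [norm_smul, integral_const_mul, smul_eq_mul] using
    hcont.integrable_of_hasCompactSupport hfc.norm.mul_right

theorem integral_smul_cauchyTransform [CompleteSpace E] {f : ℂ → ℂ} {g : ℂ → E}
    (hf : Continuous f) (hfc : HasCompactSupport f) (hg : Continuous g)
    (hgc : HasCompactSupport g) :
    ∫ w, f w • cauchyTransform g w = -∫ u, cauchyTransform f u • g u := by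
  have pull_left (w : ℂ) : f w • cauchyTransform g w =
      (π : ℂ)⁻¹ • ∫ u, f w • (w - u)⁻¹ • g u := by
    rw [cauchyTransform, smul_comm, integral_smul]
  have pull_right (u : ℂ) : -(cauchyTransform f u • g u) =
      (π : ℂ)⁻¹ • ∫ w, f w • (w - u)⁻¹ • g u := by
    have hkernel (w : ℂ) : f w • (w - u)⁻¹ • g u = -((u - w)⁻¹ • f w) • g u := by
      rw [smul_smul, ← neg_sub u w, inv_neg, smul_eq_mul, mul_neg, mul_comm]
    simp only [hkernel]
    rw [integral_smul_const, integral_neg, cauchyTransform, smul_assoc, neg_smul, smul_neg]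
  calc ∫ w, f w • cauchyTransform g w
      = (π : ℂ)⁻¹ • ∫ w, ∫ u, f w • (w - u)⁻¹ • g u := by
        rw [← integral_smul]
        exact integral_congr_ae (.of_forall pull_left)
    _ = (π : ℂ)⁻¹ • ∫ u, ∫ w, f w • (w - u)⁻¹ • g u := by
        rw [integral_integral_swap (integrable_prod_smul_inv_sub_smul hf hfc hg hgc)]
    _ = -∫ u, cauchyTransform f u • g u := by
        rw [← integral_smul, ← integral_neg]
        exact integral_congr_ae (.of_forall fun u ↦ (pull_right u).symm)

end CauchyTransform

section Resolvent

variable {R A : Type*} [CommRing R] [Ring A] [Algebra R A]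

theorem commute_resolvent (a : A) (r : R) : Commute a (resolvent a r) := by
  have hcomm : Commute a (algebraMap R A r - a) :=
    (Algebra.commute_algebraMap_right r a).sub_right (Commute.refl a)
  by_cases hr : r ∈ resolventSet R a
  · rw [spectrum.resolvent_eq hr]
    exact Commute.units_inv_right hcomm
  · rw [resolvent, Ring.inverse_non_unit _ hr]
    exact Commute.zero_right a

theorem sub_mul_resolvent {a : A} {r : R} (hr : r ∈ resolventSet R a) (s : R) :
    (algebraMap R A s - a) * resolvent a r = (s - r) • resolvent a r + 1 := by
  have hinv : (algebraMap R A r - a) * resolvent a r = 1 := Ring.mul_inverse_cancel _ hr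
  rw [← hinv, Algebra.smul_def, ← add_mul, map_sub, sub_add_sub_cancel]

end Resolvent

section DynkinCalculus

variable {A : Type*} [NormedRing A] [NormedAlgebra ℂ A] {a : A} {φ ψ : ℂ → ℂ}

/-- `φ` is a symbol for the functional calculus of `a`: a compactly supported `C¹` function on the
plane that is holomorphic on a neighbourhood of the spectrum of `a`. -/
structure IsDynkinSymbol (a : A) (φ : ℂ → ℂ) : Prop where
  contDiff : ContDiff ℝ 1 φ
  hasCompactSupport : HasCompactSupport φ
  tsupport_dbar_subset : tsupport (dbar φ) ⊆ resolventSet ℂ a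

/-- The density `∂φ/∂z̄ · (z - a)⁻¹` whose integral gives the functional calculus of `a`. On the
spectrum of `a`, where `resolvent a` takes the junk value `0`, the first factor vanishes for every
symbol `φ`. -/
noncomputable def resolventDensity (a : A) (φ : ℂ → ℂ) (z : ℂ) : A :=
  dbar φ z • resolvent a z

/-- The Dynkin functional calculus `φ(a) = -(1/π) ∫ ∂φ/∂z̄ · (z - a)⁻¹`, an extension of the
Cauchy integral formula to symbols that are holomorphic only near the spectrum. -/
noncomputable def dynkinCalculus (a : A) (φ : ℂ → ℂ) : A :=
  -(π : ℂ)⁻¹ • ∫ z, resolventDensity a φ z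

theorem resolventDensity_mul (hφ : ContDiff ℝ 1 φ) (hψ : ContDiff ℝ 1 ψ) (z : ℂ) :
    resolventDensity a (φ * ψ) z =
      ψ z • resolventDensity a φ z + φ z • resolventDensity a ψ z := by
  simp only [resolventDensity]
  rw [dbar_mul (hφ.differentiable one_ne_zero z) (hψ.differentiable one_ne_zero z)]
  module

theorem IsDynkinSymbol.mul (hφ : IsDynkinSymbol a φ) (hψ : IsDynkinSymbol a ψ) :
    IsDynkinSymbol a (φ * ψ) where
  contDiff := hφ.contDiff.mul hψ.contDiff
  hasCompactSupport := hφ.hasCompactSupport.mul_right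
  tsupport_dbar_subset := by
    have hdbar : dbar (φ * ψ) = dbar φ * ψ + φ * dbar ψ :=
      funext fun z ↦ dbar_mul (hφ.contDiff.differentiable one_ne_zero z)
        (hψ.contDiff.differentiable one_ne_zero z)
    rw [hdbar]
    exact (tsupport_add _ _).trans (union_subset
      (tsupport_mul_subset_left.trans hφ.tsupport_dbar_subset)
      (tsupport_mul_subset_right.trans hψ.tsupport_dbar_subset))

theorem IsDynkinSymbol.hasCompactSupport_resolventDensity (hφ : IsDynkinSymbol a φ) :
    HasCompactSupport (resolventDensity a φ) :=
  (hasCompactSupport_dbar hφ.hasCompactSupport).smul_right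

variable [CompleteSpace A]

theorem differentiableOn_resolvent (a : A) :
    DifferentiableOn ℂ (resolvent a) (resolventSet ℂ a) := fun _ hz ↦
  (spectrum.hasDerivAt_resolvent_const_left hz).differentiableAt.differentiableWithinAt

namespace IsDynkinSymbol

theorem continuous_resolventDensity (hφ : IsDynkinSymbol a φ) :
    Continuous (resolventDensity a φ) :=
  ((continuous_dbar hφ.contDiff).continuousOn.smul
    (differentiableOn_resolvent a).continuousOn).continuous_of_tsupport_subset
      (spectrum.isOpen_resolventSet a)
      ((tsupport_smul_subset_left _ _).trans hφ.tsupport_dbar_subset)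

theorem integrable_resolventDensity (hφ : IsDynkinSymbol a φ) :
    Integrable (resolventDensity a φ) :=
  hφ.continuous_resolventDensity.integrable_of_hasCompactSupport
    hφ.hasCompactSupport_resolventDensity

theorem commute_cauchyTransform (hφ : IsDynkinSymbol a φ) (z : ℂ) :
    Commute a (cauchyTransform (resolventDensity a φ) z) := by
  have hint := integrable_inv_sub_smul hφ.continuous_resolventDensity
    hφ.hasCompactSupport_resolventDensity z
  refine Commute.smul_right ?_ _
  rw [Commute, SemiconjBy, ← integral_const_mul_of_integrable hint,
    ← integral_mul_const_of_integrable hint]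
  simp only [resolventDensity, (((commute_resolvent a _).smul_right (dbar φ _)).smul_right _).eq]

theorem sub_mul_cauchyTransform (hφ : IsDynkinSymbol a φ) (z : ℂ) :
    (algebraMap ℂ A z - a) * cauchyTransform (resolventDensity a φ) z =
      algebraMap ℂ A (φ z) - dynkinCalculus a φ := by
  have hint := integrable_inv_sub_smul hφ.continuous_resolventDensity
    hφ.hasCompactSupport_resolventDensity z
  have hint_scalar := integrable_inv_sub_smul (continuous_dbar hφ.contDiff)
    (hasCompactSupport_dbar hφ.hasCompactSupport) z
  have resolvent_identity (w : ℂ) (hw : w ≠ z) :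
      (algebraMap ℂ A z - a) * ((z - w)⁻¹ • resolventDensity a φ w) =
        resolventDensity a φ w + ((z - w)⁻¹ • dbar φ w) • (1 : A) := by
    by_cases hmem : w ∈ tsupport (dbar φ)
    · rw [resolventDensity, mul_smul_comm, mul_smul_comm,
        sub_mul_resolvent (hφ.tsupport_dbar_subset hmem), smul_add, smul_add, smul_comm,
        smul_smul (z - w)⁻¹, smul_smul (z - w)⁻¹, inv_mul_cancel₀ (sub_ne_zero.2 hw.symm),
        one_smul, smul_eq_mul]
    · simp [resolventDensity, image_eq_zero_of_notMem_tsupport hmem]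
  have hscalar : (π : ℂ)⁻¹ • ∫ w, (z - w)⁻¹ • dbar φ w = φ z :=
    congrFun (cauchyTransform_dbar hφ.contDiff hφ.hasCompactSupport) z
  rw [cauchyTransform, mul_smul_comm, ← integral_const_mul_of_integrable hint,
    integral_congr_ae ((Measure.ae_ne volume z).mono resolvent_identity),
    integral_add hφ.integrable_resolventDensity (hint_scalar.smul_const 1),
    integral_smul_const, smul_add, ← smul_assoc, hscalar, Algebra.algebraMap_eq_smul_one,
    dynkinCalculus, neg_smul, sub_neg_eq_add, add_comm]

theorem mem_spectrum_dynkinCalculus (hφ : IsDynkinSymbol a φ) {z : ℂ} (hz : z ∈ spectrum ℂ a) :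
    φ z ∈ spectrum ℂ (dynkinCalculus a φ) := by
  have hcomm : Commute (algebraMap ℂ A z - a) (cauchyTransform (resolventDensity a φ) z) :=
    (Algebra.commute_algebraMap_left z _).sub_left (hφ.commute_cauchyTransform z)
  rw [spectrum.mem_iff, ← hφ.sub_mul_cauchyTransform, hcomm.isUnit_mul_iff]
  exact fun h ↦ hz h.1

theorem resolvent_mul_dynkinCalculus (hψ : IsDynkinSymbol a ψ) {w : ℂ}
    (hw : w ∈ resolventSet ℂ a) :
    resolvent a w * dynkinCalculus a ψ =
      ψ w • resolvent a w - cauchyTransform (resolventDensity a ψ) w := by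
  have hinv : resolvent a w * (algebraMap ℂ A w - a) = 1 := Ring.inverse_mul_cancel _ hw
  have := congrArg (resolvent a w * ·) (hψ.sub_mul_cauchyTransform w)
  simp only [← mul_assoc, hinv, one_mul, mul_sub, ← Algebra.commutes, ← Algebra.smul_def] at this
  rw [this, sub_sub_cancel]

theorem resolventDensity_mul_dynkinCalculus (hφ : IsDynkinSymbol a φ) (hψ : IsDynkinSymbol a ψ)
    (w : ℂ) : resolventDensity a φ w * dynkinCalculus a ψ =
      ψ w • resolventDensity a φ w - dbar φ w • cauchyTransform (resolventDensity a ψ) w := by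
  by_cases hw : w ∈ tsupport (dbar φ)
  · rw [resolventDensity, smul_mul_assoc, hψ.resolvent_mul_dynkinCalculus
      (hφ.tsupport_dbar_subset hw), smul_sub, smul_comm]
  · simp [resolventDensity, image_eq_zero_of_notMem_tsupport hw]

theorem dynkinCalculus_mul (hφ : IsDynkinSymbol a φ) (hψ : IsDynkinSymbol a ψ) :
    dynkinCalculus a (φ * ψ) = dynkinCalculus a φ * dynkinCalculus a ψ := by
  have hdbar := continuous_dbar hφ.contDiff
  have hdbar_supp := hasCompactSupport_dbar hφ.hasCompactSupport
  have hint_left : Integrable fun w ↦ ψ w • resolventDensity a φ w :=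
    (hψ.contDiff.continuous.smul hφ.continuous_resolventDensity).integrable_of_hasCompactSupport
      hφ.hasCompactSupport_resolventDensity.smul_left
  have hint_right : Integrable fun w ↦ φ w • resolventDensity a ψ w :=
    (hφ.contDiff.continuous.smul hψ.continuous_resolventDensity).integrable_of_hasCompactSupport
      hψ.hasCompactSupport_resolventDensity.smul_left
  have hint_cauchy : Integrable fun w ↦ dbar φ w • cauchyTransform (resolventDensity a ψ) w :=
    (hdbar.smul (continuous_cauchyTransform hψ.continuous_resolventDensity
      hψ.hasCompactSupport_resolventDensity)).integrable_of_hasCompactSupport hdbar_supp.smul_right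
  have antisymm : ∫ w, dbar φ w • cauchyTransform (resolventDensity a ψ) w =
      -∫ w, φ w • resolventDensity a ψ w := by
    rw [integral_smul_cauchyTransform hdbar hdbar_supp hψ.continuous_resolventDensity
      hψ.hasCompactSupport_resolventDensity, cauchyTransform_dbar hφ.contDiff hφ.hasCompactSupport]
  rw [dynkinCalculus, dynkinCalculus, smul_mul_assoc,
    ← integral_mul_const_of_integrable hφ.integrable_resolventDensity]
  simp only [hφ.resolventDensity_mul_dynkinCalculus hψ,
    resolventDensity_mul hφ.contDiff hψ.contDiff]
  rw [integral_add hint_left hint_right, integral_sub hint_left hint_cauchy, antisymm,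
    sub_neg_eq_add]

theorem dynkinCalculus_congr (hφ : IsDynkinSymbol a φ) (hψ : IsDynkinSymbol a ψ)
    (h : ∀ z ∈ spectrum ℂ a, φ =ᶠ[𝓝 z] ψ) : dynkinCalculus a φ = dynkinCalculus a ψ := by
  have hsupp : tsupport (φ - ψ) ⊆ resolventSet ℂ a := fun z hz ↦ by
    by_contra hmem
    exact notMem_tsupport_iff_eventuallyEq.2 ((h z hmem).sub_eq) hz
  have hdensity (z : ℂ) : resolventDensity a φ z - resolventDensity a ψ z =
      dbar (φ - ψ) z • resolvent a z := by
    rw [resolventDensity, resolventDensity, ← sub_smul,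
      dbar_sub (hφ.contDiff.differentiable one_ne_zero z)
        (hψ.contDiff.differentiable one_ne_zero z)]
  rw [dynkinCalculus, dynkinCalculus, ← sub_eq_zero, ← smul_sub,
    ← integral_sub hφ.integrable_resolventDensity hψ.integrable_resolventDensity]
  simp only [hdensity]
  rw [integral_dbar_smul_eq_zero (φ := φ - ψ) (hφ.contDiff.sub hψ.contDiff)
    (hφ.hasCompactSupport.sub hψ.hasCompactSupport) (spectrum.isOpen_resolventSet a) hsupp
    (differentiableOn_resolvent a), smul_zero]

end IsDynkinSymbol

end DynkinCalculus

theorem exists_contDiff_cutoff {E : Type*} [NormedAddCommGroup E] [NormedSpace ℝ E]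
    [FiniteDimensional ℝ E] (𝕜 : Type*) [RCLike 𝕜] (n : ℕ∞) {K L : Set E} (hK : IsCompact K)
    (hL : IsClosed L) (hKL : Disjoint K L) :
    ∃ φ : E → 𝕜, ContDiff ℝ n φ ∧ HasCompactSupport φ ∧
      (∀ x ∈ K, φ =ᶠ[𝓝 x] fun _ ↦ 1) ∧ ∀ x ∈ L, φ =ᶠ[𝓝 x] fun _ ↦ 0 := by
  obtain ⟨M, hM, hKM, hML⟩ := exists_compact_between hK hL.isOpen_compl hKL.subset_compl_right
  obtain ⟨χ, χ_one, χ_zero, -⟩ := exists_contMDiffMap_one_nhds_of_subset_interior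
    (n := n) (modelWithCornersSelf ℝ E) hK.isClosed hKM
  have hzero (x) (hx : x ∉ M) : (χ x : 𝕜) = 0 := by rw [χ_zero x hx, RCLike.ofReal_zero]
  refine ⟨fun x ↦ χ x, (RCLike.ofRealCLM (K := 𝕜)).contDiff.comp χ.contMDiff.contDiff,
    HasCompactSupport.intro hM hzero, fun x hx ↦ ?_, fun x hx ↦ ?_⟩
  · filter_upwards [eventually_nhdsSet_iff_forall.1 χ_one x hx] with y hy
    rw [hy, RCLike.ofReal_one]
  · filter_upwards [hM.isClosed.isOpen_compl.mem_nhds fun h ↦ hML h hx] with y hy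
    exact hzero y hy

theorem exists_idempotent_of_spectrum_subset_union {A : Type*} [NormedRing A]
    [NormedAlgebra ℂ A] [CompleteSpace A] {a : A} {u v : Set ℂ} (hu : IsClosed u)
    (hv : IsClosed v) (huv : Disjoint u v) (hcover : spectrum ℂ a ⊆ u ∪ v) :
    ∃ p : A, p * p = p ∧ ((spectrum ℂ a ∩ u).Nonempty → 1 ∈ spectrum ℂ p) ∧
      ((spectrum ℂ a ∩ v).Nonempty → 0 ∈ spectrum ℂ p) := by
  obtain ⟨φ, φ_contDiff, φ_supp, φ_one, φ_zero⟩ := exists_contDiff_cutoff ℂ 1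
    ((spectrum.isCompact a).inter_right hu) hv (huv.mono_left inter_subset_right)
  have φ_cases (z) (hz : z ∈ spectrum ℂ a) :
      (φ =ᶠ[𝓝 z] fun _ ↦ 1) ∨ φ =ᶠ[𝓝 z] fun _ ↦ 0 :=
    (hcover hz).imp (fun hzu ↦ φ_one z ⟨hz, hzu⟩) (φ_zero z)
  have φ_symbol : IsDynkinSymbol a φ := by
    refine ⟨φ_contDiff, φ_supp, fun z hz ↦ by_contra fun hmem ↦ ?_⟩
    rcases φ_cases z hmem with h | h <;> exact notMem_tsupport_dbar_of_eventuallyEq_const h hz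
  have φ_sq (z) (hz : z ∈ spectrum ℂ a) : φ * φ =ᶠ[𝓝 z] φ := by
    rcases φ_cases z hz with h | h <;> filter_upwards [h] with w hw <;> simp [hw]
  refine ⟨dynkinCalculus a φ, ?_, ?_, ?_⟩
  · rw [← φ_symbol.dynkinCalculus_mul φ_symbol,
      (φ_symbol.mul φ_symbol).dynkinCalculus_congr φ_symbol φ_sq]
  · rintro ⟨z, hz⟩
    simpa [(φ_one z hz).eq_of_nhds] using φ_symbol.mem_spectrum_dynkinCalculus hz.1
  · rintro ⟨z, hz⟩
    simpa [(φ_zero z hz.2).eq_of_nhds] using φ_symbol.mem_spectrum_dynkinCalculus hz.1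

theorem stmt_9 {A : Type*} [NormedRing A] [NormedAlgebra ℂ A] [CompleteSpace A]
    [Nontrivial A] (hidem : ∀ a : A, a * a = a → a = 0 ∨ a = 1) (a : A) :
    IsConnected (spectrum ℂ a) := by
  refine ⟨spectrum.nonempty a,
    (isPreconnected_iff_subset_of_fully_disjoint_closed (spectrum.isClosed a)).2 ?_⟩
  intro u v hu hv hcover huv
  obtain ⟨p, hp, one_mem, zero_mem⟩ := exists_idempotent_of_spectrum_subset_union hu hv huv hcover
  rcases hidem p hp with rfl | rfl
  · refine .inr fun z hz ↦ (hcover hz).resolve_left fun hzu ↦ ?_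
    simpa [spectrum.zero_eq] using one_mem ⟨z, hz, hzu⟩
  · refine .inl fun z hz ↦ (hcover hz).resolve_right fun hzv ↦ ?_
    simpa [spectrum.one_eq] using zero_mem ⟨z, hz, hzv⟩
end
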